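/- Let τ ∈ 𝕋², y ∈ [0,1], and δ ∈ ℂ² with Re(τ̄¹δ¹) < 0 and Re(τ̄²δ²) < 0. Then d := τ²δ¹(1−y) + τ¹δ²y ≠ 0, and for every t > 0 with τ + tδ ∈ 𝔻² one has φ_y(τ + tδ) = 1 + t·δ¹δ²/d. In particular lim_{t→0⁺} (φ_y(τ+tδ) − 1)/t = δ¹δ²/(τ²δ¹(1−y) + τ¹δ²y). -/

import Mathlib

open Complex Filter Set

/-- The scalar rational inner function `φ_y` associated to `τ ∈ 𝕋²` and `y ∈ [0,1]`. -/
noncomputable def phiy (τ : ℂ × ℂ) (y : ℝ) (z : ℂ × ℂ) : ℂ :=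
  (starRingEnd ℂ τ.1 * z.1 * (y : ℂ) + starRingEnd ℂ τ.2 * z.2 * (1 - (y : ℂ))
      - starRingEnd ℂ τ.1 * starRingEnd ℂ τ.2 * z.1 * z.2) /
    (1 - starRingEnd ℂ τ.1 * z.1 * (1 - (y : ℂ)) - starRingEnd ℂ τ.2 * z.2 * (y : ℂ))

/-!
On the torus `τ̄ʲ = 1 / τʲ`, so multiplying the numerator and the denominator of `φ_y` at `τ + δ` by
`-τ¹τ²` turns them into `d + δ¹δ²` and `d`, where `d = τ²δ¹(1 - y) + τ¹δ²y`. Hence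
`φ_y (τ + δ) = 1 + δ¹δ² / d` whenever `d ≠ 0`. Since `d` is homogeneous of degree one in `δ`, the
increment is linear along each line through `τ`. Finally, `d / (τ¹τ²)` is a convex combination of
`τ̄¹δ¹` and `τ̄²δ²`, so it cannot vanish when both of these lie in the open left half-plane.
-/

section

open scoped ComplexConjugate Topology

theorem convex_comb_ne_zero_of_re_neg {a b : ℂ} {y : ℝ} (hy0 : 0 ≤ y) (hy1 : y ≤ 1)
    (ha : a.re < 0) (hb : b.re < 0) : (1 - y) • a + y • b ≠ 0 := by
  have hre : ((1 - y) • a + y • b).re < 0 :=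
    convex_halfSpace_re_lt 0 ha hb (sub_nonneg.2 hy1) hy0 (sub_add_cancel 1 y)
  exact fun h => hre.ne (by rw [h, zero_re])

theorem tendsto_ofReal_nhdsGT_nhdsNE (x : ℝ) : Tendsto ofReal (𝓝[>] x) (𝓝[≠] (x : ℂ)) :=
  continuous_ofReal.continuousWithinAt.tendsto_nhdsWithin fun _ ht => ofReal_injective.ne ht.ne'

/-- The linear form `d = τ²δ¹(1 - y) + τ¹δ²y` in the direction `δ`, which is the denominator of
`φ_y (τ + δ) - 1` after clearing the conjugates of `τ`. -/
def dirDenom (τ : ℂ × ℂ) (y : ℝ) (δ : ℂ × ℂ) : ℂ :=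
  τ.2 * δ.1 * (1 - (y : ℂ)) + τ.1 * δ.2 * (y : ℂ)

theorem dirDenom_smul (τ : ℂ × ℂ) (y : ℝ) (t : ℂ) (δ : ℂ × ℂ) :
    dirDenom τ y (t • δ) = t * dirDenom τ y δ := by
  simp only [dirDenom, Prod.smul_fst, Prod.smul_snd, smul_eq_mul]
  ring

variable {τ δ : ℂ × ℂ} {y : ℝ}

theorem dirDenom_eq_mul_convex_comb (hτ1 : ‖τ.1‖ = 1) (hτ2 : ‖τ.2‖ = 1) :
    dirDenom τ y δ = τ.1 * τ.2 * ((1 - y) • (conj τ.1 * δ.1) + y • (conj τ.2 * δ.2)) := by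
  have h1 : τ.1 ≠ 0 := ne_zero_of_norm_ne_zero (hτ1.trans_ne one_ne_zero)
  have h2 : τ.2 ≠ 0 := ne_zero_of_norm_ne_zero (hτ2.trans_ne one_ne_zero)
  rw [dirDenom, ← inv_eq_conj hτ1, ← inv_eq_conj hτ2, real_smul, real_smul, ofReal_sub, ofReal_one]
  field_simp

theorem dirDenom_ne_zero (hτ1 : ‖τ.1‖ = 1) (hτ2 : ‖τ.2‖ = 1) (hy0 : 0 ≤ y) (hy1 : y ≤ 1)
    (hδ1 : (conj τ.1 * δ.1).re < 0) (hδ2 : (conj τ.2 * δ.2).re < 0) : dirDenom τ y δ ≠ 0 := by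
  have h1 : τ.1 ≠ 0 := ne_zero_of_norm_ne_zero (hτ1.trans_ne one_ne_zero)
  have h2 : τ.2 ≠ 0 := ne_zero_of_norm_ne_zero (hτ2.trans_ne one_ne_zero)
  rw [dirDenom_eq_mul_convex_comb hτ1 hτ2]
  exact mul_ne_zero (mul_ne_zero h1 h2) (convex_comb_ne_zero_of_re_neg hy0 hy1 hδ1 hδ2)

theorem phiy_add (hτ1 : ‖τ.1‖ = 1) (hτ2 : ‖τ.2‖ = 1) (hd : dirDenom τ y δ ≠ 0) :
    phiy τ y (τ + δ) = 1 + δ.1 * δ.2 / dirDenom τ y δ := by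
  have h1 : τ.1 ≠ 0 := ne_zero_of_norm_ne_zero (hτ1.trans_ne one_ne_zero)
  have h2 : τ.2 ≠ 0 := ne_zero_of_norm_ne_zero (hτ2.trans_ne one_ne_zero)
  have hnum : τ.1⁻¹ * (τ.1 + δ.1) * y + τ.2⁻¹ * (τ.2 + δ.2) * (1 - y)
      - τ.1⁻¹ * τ.2⁻¹ * (τ.1 + δ.1) * (τ.2 + δ.2) =
      -(dirDenom τ y δ + δ.1 * δ.2) / (τ.1 * τ.2) := by
    rw [dirDenom]
    field_simp
    ring
  have hden : 1 - τ.1⁻¹ * (τ.1 + δ.1) * (1 - y) - τ.2⁻¹ * (τ.2 + δ.2) * y =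
      -dirDenom τ y δ / (τ.1 * τ.2) := by
    rw [dirDenom]
    field_simp
    ring
  rw [phiy, ← inv_eq_conj hτ1, ← inv_eq_conj hτ2, Prod.fst_add, Prod.snd_add, hnum, hden,
    div_div_div_cancel_right₀ (mul_ne_zero h1 h2), neg_div_neg_eq, add_div, div_self hd]

theorem phiy_add_smul (hτ1 : ‖τ.1‖ = 1) (hτ2 : ‖τ.2‖ = 1) (hd : dirDenom τ y δ ≠ 0)
    {t : ℂ} (ht : t ≠ 0) :
    phiy τ y (τ + t • δ) = 1 + t * δ.1 * δ.2 / dirDenom τ y δ := by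
  have htd : dirDenom τ y (t • δ) ≠ 0 := dirDenom_smul τ y t δ ▸ mul_ne_zero ht hd
  have hprod : (t • δ).1 * (t • δ).2 = t * (t * δ.1 * δ.2) := by
    simp only [Prod.smul_fst, Prod.smul_snd, smul_eq_mul]
    ring
  rw [phiy_add hτ1 hτ2 htd, dirDenom_smul, hprod, mul_div_mul_left _ _ ht]

theorem tendsto_phiy_add_smul_sub_one_div (hτ1 : ‖τ.1‖ = 1) (hτ2 : ‖τ.2‖ = 1)
    (hd : dirDenom τ y δ ≠ 0) :
    Tendsto (fun t : ℂ => (phiy τ y (τ + t • δ) - 1) / t) (𝓝[≠] 0)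
      (𝓝 (δ.1 * δ.2 / dirDenom τ y δ)) := by
  refine tendsto_const_nhds.congr' ?_
  filter_upwards [self_mem_nhdsWithin] with t ht
  rw [phiy_add_smul hτ1 hτ2 hd ht, add_sub_cancel_left, mul_assoc t, mul_div_assoc t,
    mul_div_cancel_left₀ _ ht]

theorem stmt7_general (hτ1 : ‖τ.1‖ = 1) (hτ2 : ‖τ.2‖ = 1) (hy0 : 0 ≤ y) (hy1 : y ≤ 1)
    (hδ1 : (conj τ.1 * δ.1).re < 0) (hδ2 : (conj τ.2 * δ.2).re < 0) :
    dirDenom τ y δ ≠ 0 ∧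
    (∀ t : ℂ, t ≠ 0 → phiy τ y (τ + t • δ) = 1 + t * δ.1 * δ.2 / dirDenom τ y δ) ∧
    Tendsto (fun t : ℂ => (phiy τ y (τ + t • δ) - 1) / t) (𝓝[≠] 0)
      (𝓝 (δ.1 * δ.2 / dirDenom τ y δ)) := by
  have hd := dirDenom_ne_zero hτ1 hτ2 hy0 hy1 hδ1 hδ2
  exact ⟨hd, fun _ ht => phiy_add_smul hτ1 hτ2 hd ht, tendsto_phiy_add_smul_sub_one_div hτ1 hτ2 hd⟩

end

theorem stmt7 (τ : ℂ × ℂ) (hτ1 : ‖τ.1‖ = 1) (hτ2 : ‖τ.2‖ = 1)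
    (y : ℝ) (hy0 : 0 ≤ y) (hy1 : y ≤ 1)
    (δ : ℂ × ℂ) (hδ1 : (starRingEnd ℂ τ.1 * δ.1).re < 0)
    (hδ2 : (starRingEnd ℂ τ.2 * δ.2).re < 0) :
    τ.2 * δ.1 * (1 - (y : ℂ)) + τ.1 * δ.2 * (y : ℂ) ≠ 0 ∧
    (∀ t : ℝ, 0 < t → ‖(τ.1 + (t : ℂ) * δ.1, τ.2 + (t : ℂ) * δ.2)‖ < 1 →
      phiy τ y (τ.1 + (t : ℂ) * δ.1, τ.2 + (t : ℂ) * δ.2) =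
        1 + (t : ℂ) * δ.1 * δ.2 / (τ.2 * δ.1 * (1 - (y : ℂ)) + τ.1 * δ.2 * (y : ℂ))) ∧
    Tendsto (fun t : ℝ =>
        (phiy τ y (τ.1 + (t : ℂ) * δ.1, τ.2 + (t : ℂ) * δ.2) - 1) / (t : ℂ))
      (nhdsWithin (0 : ℝ) (Set.Ioi 0))
      (nhds (δ.1 * δ.2 / (τ.2 * δ.1 * (1 - (y : ℂ)) + τ.1 * δ.2 * (y : ℂ)))) := by
  obtain ⟨hd, hφ, hlim⟩ := stmt7_general hτ1 hτ2 hy0 hy1 hδ1 hδ2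
  exact ⟨hd, fun t ht _ => hφ t (ofReal_ne_zero.2 ht.ne'),
    hlim.comp (tendsto_ofReal_nhdsGT_nhdsNE 0)⟩
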